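/- arXiv:1907.00296 — 3 statements merged into one kernel-verified Lean document; each statement's English description precedes it below -/
import Mathlib

section
/- Let γ : ℝ → ℝ² be a smooth (C^∞) curve parametrized by arc length, i.e. ‖γ'(t)‖ = 1 for all t, set x = γ(0), and suppose κ := ‖γ''(0)‖ > 0. Let r = 1/κ and let c = x + γ''(0)/κ² be the center of the osculating circle of γ at x. Then there exist constants C > 0 and ε > 0 such that for all s ∈ (0, ε), | r·arccos( ⟨x − c, γ(s) − c⟩ / (r ‖γ(s) − c‖) ) − s | ≤ C s⁴. -/
open RealInnerProductSpace

open Asymptotics Filter InnerProductGeometry Set Topology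

/-!
Let `e` and `T` be the outward normal and the tangent of the curve at `x`, and `θ = κ s`. By Taylor
expansion the rescaled curve `κ (γ - c)` agrees with the unit circle `cos θ • e + sin θ • T` up to
an error `O(s³)`, whose leading term is orthogonal to `T`: the derivatives of `‖γ'‖² = 1` give
`⟪T, γ'''⟫ = -κ²`. An error `d` changes the angle to `e` by `O(|⟪T, d⟫| + ‖d‖² / θ + ‖d‖ θ)`,
because only its component along `T` matters to first order when `θ` is small. Hence the angle is
`θ + O(s⁴)`.
-/

section Taylor

variable {F : Type*} [NormedAddCommGroup F] [NormedSpace ℝ F]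

lemma taylor_isLittleO_of_contDiffAt {f : ℝ → F} {t₀ : ℝ} {n : ℕ} (hf : ContDiffAt ℝ n f t₀) :
    (fun t ↦ f t - taylorWithinEval f n univ t₀ t) =o[𝓝 t₀] fun t ↦ (t - t₀) ^ n := by
  obtain ⟨u, hu, hfu⟩ := hf.contDiffOn le_rfl (by simp)
  obtain ⟨ε, hε, hball⟩ := Metric.mem_nhds_iff.mp hu
  have ht₀ : t₀ ∈ Metric.ball t₀ ε := Metric.mem_ball_self hε
  have h := taylor_isLittleO (convex_ball t₀ ε) ht₀ (hfu.mono hball)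
  rw [Metric.isOpen_ball.nhdsWithin_eq ht₀] at h
  have heval (t : ℝ) :
      taylorWithinEval f n univ t₀ t = taylorWithinEval f n (Metric.ball t₀ ε) t₀ t := by
    simp only [taylor_within_apply, iteratedDerivWithin_univ,
      iteratedDerivWithin_of_isOpen Metric.isOpen_ball ht₀]
  simpa only [heval] using h

lemma taylor_isBigO_of_contDiffAt {f : ℝ → F} {t₀ : ℝ} {n : ℕ}
    (hf : ContDiffAt ℝ (n + 1 : ℕ) f t₀) :
    (fun t ↦ f t - taylorWithinEval f n univ t₀ t) =O[𝓝 t₀] fun t ↦ (t - t₀) ^ (n + 1) := by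
  have hlast : (fun t ↦ (((n + 1 : ℝ) * n.factorial)⁻¹ * (t - t₀) ^ (n + 1)) •
      iteratedDerivWithin (n + 1) f univ t₀) =O[𝓝 t₀] fun t ↦ (t - t₀) ^ (n + 1) := by
    simpa using ((isBigO_refl (fun t : ℝ ↦ (t - t₀) ^ (n + 1)) (𝓝 t₀)).const_mul_left _).smul
      (isBigO_const_const (iteratedDerivWithin (n + 1) f univ t₀) (one_ne_zero (α := ℝ)) (𝓝 t₀))
  refine ((taylor_isLittleO_of_contDiffAt hf).isBigO.add hlast).congr_left fun t ↦ ?_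
  rw [taylorWithinEval_succ]
  abel

lemma isBigO_pow_pow_of_le {m n : ℕ} (h : m ≤ n) :
    (fun x : ℝ ↦ x ^ n) =O[𝓝 0] fun x ↦ x ^ m := by
  rcases h.eq_or_lt with rfl | hlt
  · exact isBigO_refl _ _
  · exact (isLittleO_pow_pow hlt).isBigO

lemma cos_sub_isBigO : (fun x ↦ Real.cos x - (1 - x ^ 2 / 2)) =O[𝓝 0] fun x ↦ x ^ 4 := by
  refine IsBigO.of_bound (5 / 96) ?_
  filter_upwards [Metric.closedBall_mem_nhds (0 : ℝ) one_pos] with x hx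
  rw [Real.norm_eq_abs, norm_pow, Real.norm_eq_abs, mul_comm]
  exact Real.cos_bound (by simpa using hx)

lemma sin_sub_isBigO : (fun x ↦ Real.sin x - (x - x ^ 3 / 6)) =O[𝓝 0] fun x ↦ x ^ 5 := by
  refine IsBigO.of_bound (1 / 100) ?_
  filter_upwards [Metric.closedBall_mem_nhds (0 : ℝ) one_pos] with x hx
  rw [Real.norm_eq_abs, norm_pow, Real.norm_eq_abs, mul_comm, mul_one_div]
  exact Real.sin_bound (by simpa using hx)

end Taylor

section InnerProductSpace

variable {E : Type*} [NormedAddCommGroup E] [InnerProductSpace ℝ E]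

lemma inner_deriv_eq_zero_of_norm_const {v : ℝ → E} {t R : ℝ} (hv : DifferentiableAt ℝ v t)
    (hR : ∀ᶠ s in 𝓝 t, ‖v s‖ = R) : ⟪v t, deriv v t⟫ = 0 := by
  have hconst : (fun s ↦ ⟪v s, v s⟫) =ᶠ[𝓝 t] fun _ ↦ R ^ 2 := by
    filter_upwards [hR] with s hs
    rw [real_inner_self_eq_norm_sq, hs]
  have h := hconst.deriv_eq
  rw [deriv_inner_apply ℝ hv hv, deriv_const, real_inner_comm (v t) (deriv v t)] at h
  linarith

lemma inner_deriv_deriv_of_norm_const {v : ℝ → E} {t R : ℝ} (hv : ContDiffAt ℝ 2 v t)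
    (hR : ∀ᶠ s in 𝓝 t, ‖v s‖ = R) : ⟪v t, deriv (deriv v) t⟫ = -‖deriv v t‖ ^ 2 := by
  have horth : (fun s ↦ ⟪v s, deriv v s⟫) =ᶠ[𝓝 t] fun _ ↦ 0 := by
    filter_upwards [hv.eventually (by simp), hR.eventually_nhds] with s hs hRs
    exact inner_deriv_eq_zero_of_norm_const (hs.differentiableAt two_ne_zero) hRs
  have h := horth.deriv_eq
  rw [deriv_inner_apply ℝ (hv.differentiableAt two_ne_zero)
    ((hv.derivWithin (m := 1) (by norm_num)).differentiableAt one_ne_zero), deriv_const,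
    real_inner_self_eq_norm_sq] at h
  linarith

lemma norm_mul_cos_angle_of_norm_eq_one {e : E} (he : ‖e‖ = 1) (v : E) :
    ‖v‖ * Real.cos (angle e v) = ⟪e, v⟫ := by
  rw [← cos_angle_mul_norm_mul_norm, he, one_mul, mul_comm]

lemma norm_mul_sin_angle_of_norm_eq_one {e : E} (he : ‖e‖ = 1) (v : E) :
    ‖v‖ * Real.sin (angle e v) = ‖v - ⟪e, v⟫ • e‖ := by
  have h := sin_angle_mul_norm_mul_norm e v
  rw [he, one_mul, mul_comm] at h
  rw [h, norm_eq_sqrt_real_inner]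
  simp only [inner_sub_left, inner_sub_right, real_inner_smul_left, real_inner_smul_right,
    real_inner_self_eq_norm_sq, norm_smul, mul_pow, Real.norm_eq_abs, sq_abs, he,
    real_inner_comm e v]
  ring_nf

lemma abs_norm_smul_add_sub_le {e : E} (he : ‖e‖ = 1) {ρ : ℝ} (hρ : 0 < ρ) (d : E) :
    |‖ρ • e + d‖ - ρ| ≤ 2 * |⟪e, d⟫| + ‖d‖ ^ 2 / ρ := by
  have hsq : ‖ρ • e + d‖ ^ 2 - ρ ^ 2 = 2 * ρ * ⟪e, d⟫ + ‖d‖ ^ 2 := by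
    rw [norm_add_sq_real, norm_smul, he, real_inner_smul_left, mul_one, Real.norm_eq_abs, sq_abs]
    ring
  refine le_of_mul_le_mul_right ?_ hρ
  calc |‖ρ • e + d‖ - ρ| * ρ
      ≤ |‖ρ • e + d‖ - ρ| * (‖ρ • e + d‖ + ρ) := by gcongr; linarith [norm_nonneg (ρ • e + d)]
    _ = |2 * ρ * ⟪e, d⟫ + ‖d‖ ^ 2| := by
      rw [← hsq, ← abs_of_pos (a := ‖ρ • e + d‖ + ρ) (by positivity), ← abs_mul]
      ring_nf
    _ ≤ |2 * ρ * ⟪e, d⟫| + |‖d‖ ^ 2| := abs_add_le _ _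
    _ = (2 * |⟪e, d⟫| + ‖d‖ ^ 2 / ρ) * ρ := by
      rw [abs_mul, abs_of_pos (by positivity : 0 < 2 * ρ), abs_sq]
      field_simp

lemma norm_sub_inner_smul_le {e : E} (he : ‖e‖ = 1) (v : E) : ‖v - ⟪e, v⟫ • e‖ ≤ ‖v‖ := by
  rw [← norm_mul_sin_angle_of_norm_eq_one he]
  exact mul_le_of_le_one_right (norm_nonneg v) (Real.sin_le_one _)

/-- The arc-length parametrization of the unit circle spanned by the orthonormal pair `e₁`, `e₂`,
starting at `e₁` in the direction `e₂`. It is the model to which a rescaled curve is compared. -/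
noncomputable def circleArc (e₁ e₂ : E) (θ : ℝ) : E :=
  Real.cos θ • e₁ + Real.sin θ • e₂

lemma circleArc_zero (e₁ e₂ : E) : circleArc e₁ e₂ 0 = e₁ := by
  simp [circleArc]

lemma continuous_circleArc (e₁ e₂ : E) : Continuous (circleArc e₁ e₂) := by
  unfold circleArc
  fun_prop

lemma norm_mul_abs_sin_angle_sub_le {e₁ e₂ : E} (h₁ : ‖e₁‖ = 1) (h₂ : ‖e₂‖ = 1)
    (h₁₂ : ⟪e₁, e₂⟫ = 0) {θ : ℝ} (hθ : 0 < Real.sin θ) (d : E) :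
    ‖circleArc e₁ e₂ θ + d‖ * |Real.sin (angle e₁ (circleArc e₁ e₂ θ + d) - θ)| ≤
      2 * |⟪e₂, d⟫| + ‖d‖ ^ 2 / Real.sin θ + ‖d‖ * Real.sin θ := by
  set y := circleArc e₁ e₂ θ + d with hy
  set d' := d - ⟪e₁, d⟫ • e₁ with hd'
  have hinner : ⟪e₁, y⟫ = Real.cos θ + ⟪e₁, d⟫ := by
    simp [hy, circleArc, inner_add_right, real_inner_smul_right, h₁, h₁₂]
  have hperp : y - ⟪e₁, y⟫ • e₁ = Real.sin θ • e₂ + d' := by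
    rw [hinner, hy, hd', circleArc]
    module
  have hd'₂ : ⟪e₂, d'⟫ = ⟪e₂, d⟫ := by
    simp [hd', inner_sub_right, real_inner_smul_right, real_inner_comm e₁ e₂, h₁₂]
  have hsplit : ‖y‖ * Real.sin (angle e₁ y - θ) =
      (‖Real.sin θ • e₂ + d'‖ - Real.sin θ) * Real.cos θ - ⟪e₁, d⟫ * Real.sin θ := by
    rw [Real.sin_sub, mul_sub, ← mul_assoc, ← mul_assoc, norm_mul_sin_angle_of_norm_eq_one h₁,
      norm_mul_cos_angle_of_norm_eq_one h₁, hperp, hinner]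
    ring
  calc ‖y‖ * |Real.sin (angle e₁ y - θ)|
      = |(‖Real.sin θ • e₂ + d'‖ - Real.sin θ) * Real.cos θ - ⟪e₁, d⟫ * Real.sin θ| := by
        rw [← hsplit, abs_mul, abs_norm]
    _ ≤ |‖Real.sin θ • e₂ + d'‖ - Real.sin θ| * |Real.cos θ| + |⟪e₁, d⟫| * |Real.sin θ| := by
        simpa only [abs_mul] using
          abs_sub ((‖Real.sin θ • e₂ + d'‖ - Real.sin θ) * Real.cos θ) (⟪e₁, d⟫ * Real.sin θ)
    _ ≤ (2 * |⟪e₂, d'⟫| + ‖d'‖ ^ 2 / Real.sin θ) * 1 + ‖d‖ * Real.sin θ := by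
        gcongr
        · exact abs_norm_smul_add_sub_le h₂ hθ d'
        · exact Real.abs_cos_le_one θ
        · simpa [h₁] using abs_real_inner_le_norm e₁ d
        · exact (abs_of_pos hθ).le
    _ ≤ 2 * |⟪e₂, d⟫| + ‖d‖ ^ 2 / Real.sin θ + ‖d‖ * Real.sin θ := by
        rw [hd'₂, mul_one]
        gcongr
        exact norm_sub_inner_smul_le h₁ d

lemma tendsto_angle_of_tendsto {α : Type*} {l : Filter α} {y : α → E} {e : E} (he : e ≠ 0)
    (hy : Tendsto y l (𝓝 e)) : Tendsto (fun a ↦ angle e (y a)) l (𝓝 0) := by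
  have h := (continuousAt_angle (x := (e, e)) he he).tendsto.comp
    (tendsto_const_nhds.prodMk_nhds hy)
  rwa [angle_self he] at h

section CircleArc

variable {α : Type*} {l : Filter α} {θ : α → ℝ} {d : α → E} {e₁ e₂ : E}

lemma tendsto_circleArc_add (hθ : Tendsto θ l (𝓝 0)) (hd : Tendsto d l (𝓝 0)) :
    Tendsto (fun a ↦ circleArc e₁ e₂ (θ a) + d a) l (𝓝 e₁) := by
  simpa [circleArc_zero] using (((continuous_circleArc e₁ e₂).tendsto 0).comp hθ).add hd

lemma angle_circleArc_add_sub_isBigO (h₁ : ‖e₁‖ = 1) (h₂ : ‖e₂‖ = 1) (h₁₂ : ⟪e₁, e₂⟫ = 0)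
    (hθ : Tendsto θ l (𝓝[>] 0)) (hd : Tendsto d l (𝓝 0)) :
    (fun a ↦ angle e₁ (circleArc e₁ e₂ (θ a) + d a) - θ a) =O[l] fun a ↦
      2 * |⟪e₂, d a⟫| + ‖d a‖ ^ 2 / Real.sin (θ a) + ‖d a‖ * Real.sin (θ a) := by
  obtain ⟨hθ₀, hθpos⟩ := tendsto_nhdsWithin_iff.mp hθ
  have hy := tendsto_circleArc_add (e₁ := e₁) (e₂ := e₂) hθ₀ hd
  have he₁ : e₁ ≠ 0 := norm_ne_zero_iff.mp (h₁ ▸ one_ne_zero)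
  have hangle : Tendsto (fun a ↦ angle e₁ (circleArc e₁ e₂ (θ a) + d a) - θ a) l (𝓝 0) := by
    simpa using (tendsto_angle_of_tendsto he₁ hy).sub hθ₀
  have hnorm : ∀ᶠ a in l, 1 / 2 < ‖circleArc e₁ e₂ (θ a) + d a‖ :=
    hy.norm.eventually_const_lt (by rw [h₁]; norm_num)
  refine (Real.isEquivalent_sin.isTheta.symm.isBigO.comp_tendsto hangle).trans
    (IsBigO.of_bound 2 ?_)
  filter_upwards [hnorm, hθpos, hθ₀.eventually_lt_const Real.pi_pos] with a ha hpos hlt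
  have hsin := Real.sin_pos_of_pos_of_lt_pi hpos hlt
  refine le_trans ?_ (mul_le_mul_of_nonneg_left
    ((norm_mul_abs_sin_angle_sub_le h₁ h₂ h₁₂ hsin (d a)).trans (Real.le_norm_self _)) zero_le_two)
  rw [Function.comp_apply, Real.norm_eq_abs, ← mul_assoc]
  exact le_mul_of_one_le_left (abs_nonneg _) (by linarith)

lemma angle_circleArc_add_sub_isBigO_pow (h₁ : ‖e₁‖ = 1) (h₂ : ‖e₂‖ = 1) (h₁₂ : ⟪e₁, e₂⟫ = 0)
    (hθ : Tendsto θ l (𝓝[>] 0)) {n : ℕ} (hn : 2 ≤ n) (hd : d =O[l] fun a ↦ θ a ^ n)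
    (hd₂ : (fun a ↦ ⟪e₂, d a⟫) =O[l] fun a ↦ θ a ^ (n + 1)) :
    (fun a ↦ angle e₁ (circleArc e₁ e₂ (θ a) + d a) - θ a) =O[l] fun a ↦ θ a ^ (n + 1) := by
  obtain ⟨hθ₀, hθpos⟩ := tendsto_nhdsWithin_iff.mp hθ
  have hd₀ : Tendsto d l (𝓝 0) :=
    hd.trans_tendsto (by simpa [show n ≠ 0 by lia] using hθ₀.pow n)
  have hsin : (fun a ↦ Real.sin (θ a)) =Θ[l] θ :=
    (Real.isEquivalent_sin.comp_tendsto hθ₀).isTheta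
  have hsq : (fun a ↦ ‖d a‖ ^ 2 / Real.sin (θ a)) =O[l] fun a ↦ θ a ^ (n + 1) := by
    have hd_sq : d =O[l] fun a ↦ θ a ^ 2 :=
      hd.trans ((isBigO_pow_pow_of_le hn).comp_tendsto hθ₀)
    refine ((hd.norm_left.mul hd_sq.norm_left).mul hsin.inv.isBigO).congr'
      (.of_forall fun a ↦ by ring) ?_
    filter_upwards [hθpos] with a ha
    field_simp [(mem_Ioi.mp ha).ne']
    ring
  have hcross : (fun a ↦ ‖d a‖ * Real.sin (θ a)) =O[l] fun a ↦ θ a ^ (n + 1) := by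
    simpa only [pow_succ] using hd.norm_left.mul hsin.isBigO
  exact (angle_circleArc_add_sub_isBigO h₁ h₂ h₁₂ hθ hd₀).trans
    (((hd₂.abs_left.const_mul_left 2).add hsq).add hcross)

end CircleArc

lemma isBigO_circleArc_of_contDiffAt {γ : ℝ → E} {t₀ κ : ℝ} {e : E}
    (hγ : ContDiffAt ℝ 4 γ t₀) (hcurv : deriv (deriv γ) t₀ = -(κ • e)) :
    (fun t ↦ κ • (γ t - γ t₀) + e - circleArc e (deriv γ t₀) (κ * (t - t₀)) -
      (κ * (t - t₀) ^ 3 / 6) • (deriv (deriv (deriv γ)) t₀ + κ ^ 2 • deriv γ t₀))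
      =O[𝓝 t₀] fun t ↦ (t - t₀) ^ 4 := by
  have hθ : Tendsto (fun t ↦ κ * (t - t₀)) (𝓝 t₀) (𝓝 0) := by
    have : Continuous (fun t ↦ κ * (t - t₀)) := by fun_prop
    simpa using this.tendsto t₀
  have hpow : (fun t ↦ (κ * (t - t₀)) ^ 4) =O[𝓝 t₀] fun t ↦ (t - t₀) ^ 4 := by
    simpa only [mul_pow] using (isBigO_refl _ _).const_mul_left (κ ^ 4)
  have htaylor := (taylor_isBigO_of_contDiffAt (n := 3) hγ).const_smul_left κ
  have hcos := ((cos_sub_isBigO.comp_tendsto hθ).trans hpow).smul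
    (isBigO_const_const e (one_ne_zero (α := ℝ)) (𝓝 t₀))
  have hsin := (((sin_sub_isBigO.trans (isBigO_pow_pow_of_le (by norm_num))).comp_tendsto
    hθ).trans hpow).smul
    (isBigO_const_const (deriv γ t₀) (one_ne_zero (α := ℝ)) (𝓝 t₀))
  simp only [smul_eq_mul, mul_one] at hcos hsin
  refine ((htaylor.sub hcos).sub hsin).congr_left fun t ↦ ?_
  simp only [taylorWithinEval_succ, taylor_within_zero_eval, CharP.cast_eq_zero, zero_add,
    Nat.factorial_zero, Nat.cast_one, mul_one, inv_one, pow_one, one_mul, iteratedDerivWithin_univ,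
    iteratedDeriv_succ, iteratedDeriv_zero, Nat.factorial_one, Nat.reduceAdd, hcurv, smul_neg,
    Nat.cast_ofNat, Nat.factorial_two, mul_inv_rev, Pi.smul_apply, Function.comp_apply, circleArc,
    smul_add]
  module

lemma isBigO_circleArc_of_unit_speed {γ : ℝ → E} {t₀ κ : ℝ} {e : E} (hγ : ContDiffAt ℝ 4 γ t₀)
    (hunit : ∀ᶠ t in 𝓝 t₀, ‖deriv γ t‖ = 1) (he : ‖e‖ = 1)
    (hcurv : deriv (deriv γ) t₀ = -(κ • e)) :
    ((fun t ↦ κ • (γ t - γ t₀) + e - circleArc e (deriv γ t₀) (κ * (t - t₀)))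
      =O[𝓝 t₀] fun t ↦ (t - t₀) ^ 3) ∧
    ((fun t ↦ ⟪deriv γ t₀, κ • (γ t - γ t₀) + e - circleArc e (deriv γ t₀) (κ * (t - t₀))⟫)
      =O[𝓝 t₀] fun t ↦ (t - t₀) ^ 4) := by
  set T := deriv γ t₀
  set w := deriv (deriv (deriv γ)) t₀ + κ ^ 2 • T
  set d : ℝ → E := fun t ↦ κ • (γ t - γ t₀) + e - circleArc e T (κ * (t - t₀))
  have hγ' : ContDiffAt ℝ 2 (deriv γ) t₀ := hγ.derivWithin (by norm_num)
  have hTw : ⟪T, w⟫ = 0 := by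
    rw [inner_add_right, inner_deriv_deriv_of_norm_const hγ' hunit, real_inner_smul_right,
      real_inner_self_eq_norm_sq, hunit.self_of_nhds, hcurv, norm_neg, norm_smul, he,
      Real.norm_eq_abs, mul_one, sq_abs]
    ring
  have hrem : (fun t ↦ d t - (κ * (t - t₀) ^ 3 / 6) • w) =O[𝓝 t₀] fun t ↦ (t - t₀) ^ 4 :=
    isBigO_circleArc_of_contDiffAt hγ hcurv
  constructor
  · have hsub : Tendsto (fun t ↦ t - t₀) (𝓝 t₀) (𝓝 0) := tendsto_sub_nhds_zero_iff.mpr tendsto_id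
    have hpow : (fun t ↦ (t - t₀) ^ 4) =O[𝓝 t₀] fun t ↦ (t - t₀) ^ 3 :=
      (isBigO_pow_pow_of_le (by norm_num)).comp_tendsto hsub
    have hcubic : (fun t ↦ (κ * (t - t₀) ^ 3 / 6) • w) =O[𝓝 t₀] fun t ↦ (t - t₀) ^ 3 := by
      refine ((isBigO_refl (fun t ↦ (t - t₀) ^ 3) (𝓝 t₀)).smul
        (isBigO_const_const ((κ / 6) • w) (one_ne_zero (α := ℝ)) _)).congr (fun t ↦ ?_)
        fun t ↦ mul_one _
      module
    simpa using (hrem.trans hpow).add hcubic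
  · refine (((innerSL ℝ T).isBigO_comp _ _).trans hrem).congr_left fun t ↦ ?_
    rw [innerSL_apply_apply, inner_sub_right, real_inner_smul_right, hTw, mul_zero, sub_zero]

lemma angle_sub_isBigO_of_unit_speed {γ : ℝ → E} {t₀ κ : ℝ} {e : E} (hγ : ContDiffAt ℝ 4 γ t₀)
    (hunit : ∀ᶠ t in 𝓝 t₀, ‖deriv γ t‖ = 1) (hκ : 0 < κ) (he : ‖e‖ = 1)
    (hcurv : deriv (deriv γ) t₀ = -(κ • e)) :
    (fun t ↦ angle e (κ • (γ t - γ t₀) + e) - κ * (t - t₀)) =O[𝓝[>] t₀]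
      fun t ↦ (t - t₀) ^ 4 := by
  have heT : ⟪e, deriv γ t₀⟫ = 0 := by
    have hγ' : ContDiffAt ℝ 3 (deriv γ) t₀ := hγ.derivWithin (by norm_num)
    have h := inner_deriv_eq_zero_of_norm_const (hγ'.differentiableAt (by norm_num)) hunit
    rw [hcurv, inner_neg_right, real_inner_smul_right, neg_eq_zero, real_inner_comm] at h
    exact (mul_eq_zero.mp h).resolve_left hκ.ne'
  have hθ : Tendsto (fun t ↦ κ * (t - t₀)) (𝓝[>] t₀) (𝓝[>] 0) := by
    have hcont : ContinuousWithinAt (fun t ↦ κ * (t - t₀)) (Ioi t₀) t₀ := by fun_prop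
    refine tendsto_nhdsWithin_iff.mpr ⟨by simpa using hcont.tendsto, ?_⟩
    filter_upwards [self_mem_nhdsWithin] with t ht
    exact mul_pos hκ (sub_pos.mpr ht)
  have hpow (n : ℕ) : (fun t ↦ (t - t₀) ^ n) =O[𝓝[>] t₀] fun t ↦ (κ * (t - t₀)) ^ n :=
    (isBigO_self_const_mul hκ.ne' _ _).pow n
  obtain ⟨hd, hd_T⟩ := isBigO_circleArc_of_unit_speed hγ hunit he hcurv
  have h := angle_circleArc_add_sub_isBigO_pow he hunit.self_of_nhds heT hθ (by norm_num)
    ((hd.mono nhdsWithin_le_nhds).trans (hpow 3)) ((hd_T.mono nhdsWithin_le_nhds).trans (hpow 4))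
  simp only [add_sub_cancel] at h
  exact h.trans ((isBigO_const_mul_self κ _ _).pow 4)

/-- The center of the osculating circle at `γ t₀` of a curve `γ` with unit speed. If the curvature
`‖γ''(t₀)‖` vanishes, there is no such circle and the value is `γ t₀`. -/
noncomputable def osculatingCenter (γ : ℝ → E) (t₀ : ℝ) : E :=
  γ t₀ + (‖deriv (deriv γ) t₀‖ ^ 2)⁻¹ • deriv (deriv γ) t₀

theorem angle_osculatingCenter_sub_isBigO {γ : ℝ → E} {t₀ : ℝ} (hγ : ContDiffAt ℝ 4 γ t₀)
    (hunit : ∀ᶠ t in 𝓝 t₀, ‖deriv γ t‖ = 1) (hκ : deriv (deriv γ) t₀ ≠ 0) :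
    (fun t ↦ angle (γ t₀ - osculatingCenter γ t₀) (γ t - osculatingCenter γ t₀) -
      ‖deriv (deriv γ) t₀‖ * (t - t₀)) =O[𝓝[>] t₀] fun t ↦ (t - t₀) ^ 4 := by
  set κ := ‖deriv (deriv γ) t₀‖ with hκ_def
  have hκ_pos : 0 < κ := norm_pos_iff.mpr hκ
  set e : E := -(κ⁻¹ • deriv (deriv γ) t₀) with he_def
  have he : ‖e‖ = 1 := by
    rw [he_def, norm_neg, norm_smul, norm_inv, norm_norm, ← hκ_def, inv_mul_cancel₀ hκ_pos.ne']
  have hcurv : deriv (deriv γ) t₀ = -(κ • e) := by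
    rw [he_def, smul_neg, neg_neg, smul_inv_smul₀ hκ_pos.ne']
  have hcenter : osculatingCenter γ t₀ = γ t₀ - κ⁻¹ • e := by
    rw [osculatingCenter, ← hκ_def, he_def, smul_neg, sub_neg_eq_add, smul_smul, sq, mul_inv]
  have hstart : γ t₀ - osculatingCenter γ t₀ = κ⁻¹ • e := by
    rw [hcenter, sub_sub_cancel]
  have hcurve (t : ℝ) : γ t - osculatingCenter γ t₀ = κ⁻¹ • (κ • (γ t - γ t₀) + e) := by
    rw [hcenter, smul_add, inv_smul_smul₀ hκ_pos.ne']
    abel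
  simpa only [hstart, hcurve, angle_smul_left_of_pos _ _ (inv_pos.mpr hκ_pos),
    angle_smul_right_of_pos _ _ (inv_pos.mpr hκ_pos)] using
    angle_sub_isBigO_of_unit_speed hγ hunit hκ_pos he hcurv

theorem stmt_2_general (γ : ℝ → E) (hγ : ContDiffAt ℝ 4 γ 0)
    (hunit : ∀ᶠ t in 𝓝 0, ‖deriv γ t‖ = 1)
    (x : E) (hx : x = γ 0)
    (κ : ℝ) (hκdef : κ = ‖deriv (deriv γ) 0‖) (hκ : 0 < κ)
    (r : ℝ) (hr : r = 1 / κ)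
    (c : E) (hc : c = x + (κ ^ 2)⁻¹ • deriv (deriv γ) 0) :
    ∃ C > (0 : ℝ), ∃ ε > (0 : ℝ), ∀ s ∈ Set.Ioo (0 : ℝ) ε,
      |r * Real.arccos (⟪x - c, γ s - c⟫ / (r * ‖γ s - c‖)) - s| ≤ C * s ^ 4 := by
  have hnorm : ‖x - c‖ = r := by
    rw [hc, sub_add_cancel_left, norm_neg, norm_smul, ← hκdef, hr, norm_inv, norm_pow,
      Real.norm_of_nonneg hκ.le]
    field_simp
  have hcenter : c = osculatingCenter γ 0 := by rw [hc, hx, hκdef, osculatingCenter]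
  have hangle := (angle_osculatingCenter_sub_isBigO hγ hunit
    (norm_pos_iff.mp (hκdef ▸ hκ))).const_mul_left r
  simp only [← hκdef, ← hcenter, ← hx, sub_zero] at hangle
  obtain ⟨C, hC, hbound⟩ := hangle.exists_pos
  obtain ⟨ε, hε, hIoo⟩ := mem_nhdsGT_iff_exists_Ioo_subset.mp hbound.bound
  refine ⟨C, hC, ε, hε, fun s hs ↦ ?_⟩
  have h := hIoo hs
  simp only [mem_ofPred_eq, Real.norm_eq_abs, abs_pow, abs_of_pos hs.1] at h
  convert h using 2
  rw [angle, hnorm, mul_sub, ← mul_assoc, hr, one_div_mul_cancel hκ.ne', one_mul]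

end InnerProductSpace

/-- Theorem 2 of the paper: for a smooth unit-speed planar curve `γ` with nonzero
curvature `κ = ‖γ''(0)‖` at `x = γ(0)`, the spherical (osculating-circle) distance
`r·arccos(⟨x − c, γ(s) − c⟩ / (r‖γ(s) − c‖))` (with `r = 1/κ` and
`c = x + γ''(0)/κ²` the osculating circle center) estimates the arc length `s`
with fourth-order error. -/
theorem stmt_2 (γ : ℝ → EuclideanSpace ℝ (Fin 2))
    (hγ : ContDiff ℝ (⊤ : ℕ∞) γ)
    (hunit : ∀ t : ℝ, ‖deriv γ t‖ = 1)
    (x : EuclideanSpace ℝ (Fin 2)) (hx : x = γ 0)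
    (κ : ℝ) (hκdef : κ = ‖deriv (deriv γ) 0‖) (hκ : 0 < κ)
    (r : ℝ) (hr : r = 1 / κ)
    (c : EuclideanSpace ℝ (Fin 2)) (hc : c = x + (κ ^ 2)⁻¹ • deriv (deriv γ) 0) :
    ∃ C > (0 : ℝ), ∃ ε > (0 : ℝ), ∀ s ∈ Set.Ioo (0 : ℝ) ε,
      |r * Real.arccos (⟪x - c, γ s - c⟫ / (r * ‖γ s - c‖)) - s| ≤ C * s ^ 4 :=
  stmt_2_general γ (contDiff_infty.mp hγ 4).contDiffAt (.of_forall hunit) x hx κ hκdef hκ r hr c hc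
end

section
/- Let γ : ℝ → ℝ^D be a smooth (C^∞) curve parametrized by arc length, i.e. ‖γ'(t)‖ = 1 for all t, set x = γ(0), and let n be a unit vector with ⟨n, γ'(0)⟩ = 0 such that γ''(0) = κ_y · n for some κ_y ∈ ℝ. Fix κ₀ > 0, let r = 1/κ₀ and c = x + r n. Then there exist constants C > 0 and ε > 0 such that for all s ∈ (0, ε), | r·arccos( ⟨x − c, γ(s) − c⟩ / (r ‖γ(s) − c‖) ) − ( s − (1/6)(κ_y − κ₀)(κ_y − 2κ₀) s³ ) | ≤ C s⁴. -/
open RealInnerProductSpace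

/-!
Put `u = -n`, so that `γ 0 - c = r • u`. The spherical distance is `r` times the angle between `u`
and `w s = γ s - c`, and the tangent of that angle is the length of the component of `w s`
orthogonal to `u` divided by `⟪u, w s⟫`. Differentiating `‖γ'‖ = 1` twice gives
`⟪γ', γ'''⟫ = -‖γ''‖ ^ 2`, and the component of `γ''' 0` along `γ' 0` is all that the length sees up
to order three. Taylor's formula for `γ` therefore determines numerator and denominator in terms of
`κy` and `r`:
`(s - κy ^ 2 / 6 * s ^ 3 + O(s ^ 4)) / (r - κy / 2 * s ^ 2 + O(s ^ 3))`,
and `arctan z = z - z ^ 3 / 3 + O(z ^ 5)` yields the coefficient of `s ^ 3`.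
-/

section

open Asymptotics Filter InnerProductGeometry Topology

open scoped Nat

theorem isBigO_sub_taylor {E : Type*} [NormedAddCommGroup E] [NormedSpace ℝ E] {f : ℝ → E}
    {a : ℝ} {n : ℕ} (hf : ContDiffAt ℝ (n + 1) f a) :
    (fun x ↦ f x - ∑ k ∈ Finset.range (n + 1), ((k ! : ℝ)⁻¹ * (x - a) ^ k) • iteratedDeriv k f a)
      =O[𝓝 a] fun x ↦ (x - a) ^ (n + 1) := by
  obtain ⟨ε, hε, hball⟩ := Metric.eventually_nhds_iff_ball.1 (hf.eventually (by simp))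
  have ha : a ∈ Metric.ball a ε := Metric.mem_ball_self hε
  have hremainder := (taylor_isLittleO (n := n + 1) (convex_ball a ε) ha fun x hx ↦
    (hball x hx).contDiffWithinAt).isBigO
  rw [nhdsWithin_eq_nhds.2 (Metric.ball_mem_nhds a hε)] at hremainder
  have hderiv (k : ℕ) : iteratedDerivWithin k f (Metric.ball a ε) a = iteratedDeriv k f a :=
    iteratedDerivWithin_of_isOpen Metric.isOpen_ball ha
  have hlast : (fun x ↦ (((n + 1)! : ℝ)⁻¹ * (x - a) ^ (n + 1)) • iteratedDeriv (n + 1) f a)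
      =O[𝓝 a] fun x ↦ (x - a) ^ (n + 1) := by
    simpa using ((isBigO_refl (fun x ↦ (x - a) ^ (n + 1)) (𝓝 a)).const_mul_left
      (((n + 1)! : ℝ)⁻¹)).smul (isBigO_const_const (iteratedDeriv (n + 1) f a) (one_ne_zero' ℝ) _)
  refine (hremainder.add hlast).congr_left fun x ↦ ?_
  rw [taylor_within_apply, Finset.sum_range_succ]
  simp only [hderiv]
  abel

theorem abs_arctan_sub_cubic_le (x : ℝ) : |Real.arctan x - (x - x ^ 3 / 3)| ≤ |x| ^ 5 := by
  have hderiv (t : ℝ) :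
      HasDerivAt (fun t ↦ Real.arctan t - (t - t ^ 3 / 3)) (t ^ 4 / (1 + t ^ 2)) t := by
    refine ((Real.hasDerivAt_arctan t).sub ((hasDerivAt_id' t).sub
      ((hasDerivAt_pow 3 t).div_const 3))).congr_deriv ?_
    field_simp
    ring
  have hbound : ∀ t ∈ Metric.closedBall (0 : ℝ) |x|, ‖t ^ 4 / (1 + t ^ 2)‖ ≤ |x| ^ 4 := by
    intro t ht
    rw [mem_closedBall_zero_iff, Real.norm_eq_abs] at ht
    calc ‖t ^ 4 / (1 + t ^ 2)‖ = t ^ 4 / (1 + t ^ 2) := Real.norm_of_nonneg (by positivity)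
      _ ≤ t ^ 4 := div_le_self (by positivity) (by linarith [sq_nonneg t])
      _ = |t| ^ 4 := ((even_two_mul 2).pow_abs t).symm
      _ ≤ |x| ^ 4 := by gcongr
  simpa [← pow_succ] using
    (convex_closedBall (0 : ℝ) |x|).norm_image_sub_le_of_norm_hasDerivWithin_le
    (fun t _ ↦ (hderiv t).hasDerivWithinAt) hbound (Metric.mem_closedBall_self (abs_nonneg x))
    (show x ∈ Metric.closedBall (0 : ℝ) |x| by simp)

theorem lipschitzWith_arctan : LipschitzWith 1 Real.arctan := by
  refine lipschitzWith_of_nnnorm_deriv_le Real.differentiable_arctan fun x ↦ ?_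
  rw [← NNReal.coe_le_coe, coe_nnnorm, Real.deriv_arctan, Real.norm_of_nonneg (by positivity)]
  exact div_le_self zero_le_one (by linarith [sq_nonneg x])

theorem isBigO_div_sub {α 𝕜 : Type*} [NormedField 𝕜] {l : Filter α} {f g z h : α → 𝕜} {b : 𝕜}
    (hfg : (fun x ↦ f x - z x * g x) =O[l] h) (hg : Tendsto g l (𝓝 b)) (hb : b ≠ 0) :
    (fun x ↦ f x / g x - z x) =O[l] h := by
  have := hfg.mul ((hg.inv₀ hb).isBigO_one 𝕜)
  simp only [mul_one] at this
  refine this.congr' ?_ .rfl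
  filter_upwards [hg.eventually_ne hb] with x hx
  field_simp

theorem isBigO_mul_pow {l : Filter ℝ} (hl : l ≤ 𝓝 0) {f : ℝ → ℝ}
    (hf : ContinuousAt f 0) (n : ℕ) : (fun x ↦ f x * x ^ n) =O[l] fun x ↦ x ^ n := by
  simpa using ((hf.tendsto.mono_left hl).isBigO_one ℝ).mul (isBigO_refl (fun x ↦ x ^ n) l)

theorem exists_forall_Ioo_abs_le_of_isBigO {F G : ℝ → ℝ} {a : ℝ} (h : F =O[𝓝[>] a] G) :
    ∃ C > 0, ∃ ε > 0, ∀ s ∈ Set.Ioo a (a + ε), |F s| ≤ C * |G s| := by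
  obtain ⟨C, hC, hbound⟩ := h.exists_pos
  obtain ⟨e, he, hIoo⟩ := mem_nhdsGT_iff_exists_Ioo_subset.1 hbound.bound
  exact ⟨C, hC, e - a, sub_pos.2 he, fun s hs ↦ hIoo (by simpa using hs)⟩

theorem tendsto_of_isBigO_sub_pow {l : Filter ℝ} (hl : l ≤ 𝓝 0) {g G : ℝ → ℝ} {n : ℕ}
    (hn : n ≠ 0) (hG : ContinuousAt G 0) (h : (fun x ↦ g x - G x) =O[l] fun x ↦ x ^ n) :
    Tendsto g l (𝓝 (G 0)) := by
  have hpow : Tendsto (fun x : ℝ ↦ x ^ n) l (𝓝 0) := by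
    simpa [hn] using ((continuous_pow (M := ℝ) n).tendsto 0).mono_left hl
  simpa using (h.trans_tendsto hpow).add (hG.tendsto.mono_left hl)

theorem isBigO_arctan_sub_cubic {l : Filter ℝ} {z Z g : ℝ → ℝ}
    (hz : (fun s ↦ z s - Z s) =O[l] g) (hZ : (fun s ↦ Z s ^ 5) =O[l] g) :
    (fun s ↦ Real.arctan (z s) - (Z s - Z s ^ 3 / 3)) =O[l] g := by
  have hlip : (fun s ↦ Real.arctan (z s) - Real.arctan (Z s)) =O[l] g :=
    (isBigO_of_le l fun s ↦ by
      simpa using lipschitzWith_arctan.norm_sub_le (z s) (Z s)).trans hz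
  have hcubic : (fun s ↦ Real.arctan (Z s) - (Z s - Z s ^ 3 / 3)) =O[l] g :=
    (isBigO_of_le l fun s ↦ by simpa using abs_arctan_sub_cubic_le (Z s)).trans hZ
  exact (hlip.add hcubic).congr_left fun s ↦ by ring

theorem isBigO_mul_arctan_div_sub {l : Filter ℝ} (hl : l ≤ 𝓝 0) {f g : ℝ → ℝ} {p q r : ℝ}
    (hr : r ≠ 0) (hf : (fun s ↦ f s - (s + p * s ^ 3)) =O[l] fun s ↦ s ^ 4)
    (hg : (fun s ↦ g s - (r + q * s ^ 2)) =O[l] fun s ↦ s ^ 3) :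
    (fun s ↦ r * Real.arctan (f s / g s) - (s + (p - q / r - 1 / (3 * r ^ 2)) * s ^ 3))
      =O[l] fun s ↦ s ^ 4 := by
  generalize hm : p - q / r = m
  let z : ℝ → ℝ := fun s ↦ (s + m * s ^ 3) / r
  have hz : z =O[l] fun s ↦ s ^ 1 :=
    (isBigO_mul_pow hl (f := fun s ↦ (1 + m * s ^ 2) / r) (by fun_prop) 1).congr_left
      fun s ↦ by simp only [z]; ring
  have hg_tendsto : Tendsto g l (𝓝 r) := by
    simpa using tendsto_of_isBigO_sub_pow hl three_ne_zero (by fun_prop) hg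
  have hquot : (fun s ↦ f s / g s - z s) =O[l] fun s ↦ s ^ 4 := by
    have hprod : (fun s ↦ z s * (g s - (r + q * s ^ 2))) =O[l] fun s ↦ s ^ 4 :=
      (hz.mul hg).congr_right fun s ↦ by ring
    have htail := isBigO_mul_pow hl (f := fun s ↦ -(q * m / r) * s) (by fun_prop) 4
    refine isBigO_div_sub (((hf.sub hprod).add htail).congr_left fun s ↦ ?_) hg_tendsto hr
    simp only [z, ← hm]
    field_simp
    ring
  have harctan : (fun s ↦ Real.arctan (f s / g s) - (z s - z s ^ 3 / 3)) =O[l] fun s ↦ s ^ 4 :=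
    isBigO_arctan_sub_cubic hquot <| (hz.pow 5).trans <| by
      simpa using (isLittleO_pow_pow (show 4 < 5 by norm_num)).isBigO.mono hl
  have htail := isBigO_mul_pow hl
    (f := fun s ↦ -(3 * m * s + 3 * m ^ 2 * s ^ 3 + m ^ 3 * s ^ 5) / (3 * r ^ 2)) (by fun_prop) 4
  refine ((harctan.const_mul_left r).add htail).congr_left fun s ↦ ?_
  simp only [z]
  field_simp
  ring

section InnerProduct

variable {E : Type*} [NormedAddCommGroup E] [InnerProductSpace ℝ E]

theorem angle_eq_arctan_norm_starProjection_div_inner {u w : E} (hu : ‖u‖ = 1)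
    (huw : 0 < ⟪u, w⟫) :
    angle u w = Real.arctan (‖(ℝ ∙ u)ᗮ.starProjection w‖ / ⟪u, w⟫) := by
  set v := (ℝ ∙ u)ᗮ.starProjection w with hv
  have hsplit : ⟪u, w⟫ • u + v = w := by
    rw [hv, ← Submodule.starProjection_unit_singleton ℝ hu,
      Submodule.starProjection_add_starProjection_orthogonal]
  have hperp : ⟪⟪u, w⟫ • u, v⟫ = 0 := by
    rw [inner_smul_left, Submodule.mem_orthogonal_singleton_iff_inner_right.1
      (Submodule.starProjection_apply_mem _ w), mul_zero]
  have hne : ⟪u, w⟫ • u ≠ 0 := smul_ne_zero huw.ne' (norm_ne_zero_iff.1 (by simp [hu]))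
  calc angle u w = angle (⟪u, w⟫ • u) (⟪u, w⟫ • u + v) := by
        rw [hsplit, angle_smul_left_of_pos _ _ huw]
    _ = Real.arctan (‖v‖ / ⟪u, w⟫) := by
        rw [angle_add_eq_arctan_of_inner_eq_zero hperp hne, norm_smul, hu, mul_one,
          Real.norm_of_nonneg huw.le]

theorem hasDerivAt_norm_add_smul {x : E} (hx : x ≠ 0) (y : E) :
    HasDerivAt (fun t : ℝ ↦ ‖x + t • y‖) (⟪x, y⟫ / ‖x‖) 0 := by
  have hline : HasDerivAt (fun t : ℝ ↦ x + t • y) y 0 := by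
    simpa using ((hasDerivAt_id' (0 : ℝ)).smul_const y).const_add x
  simpa [Real.sqrt_sq, mul_div_mul_left] using hline.norm_sq.sqrt (by simpa)

theorem isBigO_norm_add_smul_sub {x : E} (hx : x ≠ 0) (y : E) :
    (fun t : ℝ ↦ ‖x + t • y‖ - (‖x‖ + ⟪x, y⟫ / ‖x‖ * t)) =O[𝓝 0] fun t ↦ t ^ 2 := by
  have hsmooth : ContDiffAt ℝ ((1 : ℕ) + 1) (fun t : ℝ ↦ ‖x + t • y‖) 0 :=
    ContDiffAt.norm ℝ (by fun_prop) (by simpa)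
  simpa [Finset.sum_range_succ, (hasDerivAt_norm_add_smul hx y).deriv, mul_comm] using
    isBigO_sub_taylor (n := 1) hsmooth

theorem isBigO_norm_sub_of_isBigO_sub_smul_add_smul {v : ℝ → E} {T b : E} (hT : ‖T‖ = 1)
    (hv : (fun s ↦ v s - (s • T + s ^ 3 • b)) =O[𝓝[>] 0] fun s : ℝ ↦ s ^ 4) :
    (fun s ↦ ‖v s‖ - (s + ⟪T, b⟫ * s ^ 3)) =O[𝓝[>] 0] fun s : ℝ ↦ s ^ 4 := by
  have htriangle : (fun s ↦ ‖v s‖ - ‖s • T + s ^ 3 • b‖) =O[𝓝[>] 0] fun s : ℝ ↦ s ^ 4 :=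
    (isBigO_of_le _ fun s ↦ abs_norm_sub_norm_le _ _).trans hv
  have hsq : Tendsto (fun s : ℝ ↦ s ^ 2) (𝓝[>] 0) (𝓝 0) := by
    simpa using (continuous_pow (M := ℝ) 2).continuousAt.tendsto.mono_left
      (nhdsWithin_le_nhds (a := 0) (s := Set.Ioi 0))
  have hT0 : T ≠ 0 := norm_ne_zero_iff.1 (by simp [hT])
  have hmain : (fun s : ℝ ↦ s * (‖T + s ^ 2 • b‖ - (1 + ⟪T, b⟫ * s ^ 2)))
      =O[𝓝[>] 0] fun s : ℝ ↦ s ^ 4 := by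
    have hfactor := (isBigO_norm_add_smul_sub hT0 b).comp_tendsto hsq
    simp only [hT, div_one, Function.comp_def] at hfactor
    exact ((isBigO_refl (fun s : ℝ ↦ s) _).mul hfactor).trans <|
      ((isLittleO_pow_pow (show 4 < 5 by norm_num)).isBigO.mono nhdsWithin_le_nhds).congr_left
        fun s ↦ by ring
  refine (htriangle.add hmain).congr' ?_ .rfl
  filter_upwards [self_mem_nhdsWithin] with s hs
  have hnorm : ‖s • T + s ^ 3 • b‖ = s * ‖T + s ^ 2 • b‖ := by
    rw [← Real.norm_of_nonneg (le_of_lt hs), ← norm_smul, Real.norm_of_nonneg (le_of_lt hs)]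
    congr 1
    module
  rw [hnorm]
  ring

theorem isBigO_mul_angle_sub {w : ℝ → E} {u T b : E} {q r : ℝ} (hu : ‖u‖ = 1) (hT : ‖T‖ = 1)
    (huT : ⟪u, T⟫ = 0) (hr : 0 < r)
    (hw : (fun s ↦ w s - ((r + q * s ^ 2) • u + s • T + s ^ 3 • b)) =O[𝓝[>] 0]
      fun s : ℝ ↦ s ^ 4) :
    (fun s ↦ r * angle u (w s) - (s + (⟪T, b⟫ - q / r - 1 / (3 * r ^ 2)) * s ^ 3))
      =O[𝓝[>] 0] fun s : ℝ ↦ s ^ 4 := by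
  have hl : 𝓝[>] (0 : ℝ) ≤ 𝓝 0 := nhdsWithin_le_nhds
  let P := (ℝ ∙ u)ᗮ.starProjection
  have hPu : P u = 0 := Submodule.starProjection_orthogonalComplement_singleton_eq_zero u
  have hPT : P T = T := Submodule.starProjection_eq_self_iff.2
    (Submodule.mem_orthogonal_singleton_iff_inner_right.2 huT)
  have hTP : ⟪T, P b⟫ = ⟪T, b⟫ := by
    rw [← Submodule.inner_starProjection_left_eq_right, hPT]
  have hnormal : (fun s ↦ ⟪u, w s⟫ - (r + q * s ^ 2)) =O[𝓝[>] 0] fun s : ℝ ↦ s ^ 3 := by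
    have hinner := (((innerSL ℝ u).isBigO_comp _ _).trans hw).trans
      ((isLittleO_pow_pow (show 3 < 4 by norm_num)).isBigO.mono hl)
    refine (hinner.add (isBigO_mul_pow hl (f := fun _ ↦ ⟪u, b⟫) (by fun_prop) 3)).congr_left
      fun s ↦ ?_
    simp only [coe_innerSL_apply, inner_sub_right, inner_add_right, inner_smul_right,
      real_inner_self_eq_norm_sq, hu, huT]
    ring
  have htangential : (fun s ↦ ‖P (w s)‖ - (s + ⟪T, b⟫ * s ^ 3)) =O[𝓝[>] 0]
      fun s : ℝ ↦ s ^ 4 := by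
    rw [← hTP]
    refine isBigO_norm_sub_of_isBigO_sub_smul_add_smul hT
      (((P.isBigO_comp _ _).trans hw).congr_left fun s ↦ ?_)
    simp [hPu, hPT]
  refine (isBigO_mul_arctan_div_sub hl hr.ne' htangential hnormal).congr' ?_ .rfl
  have htendsto : Tendsto (fun s ↦ ⟪u, w s⟫) (𝓝[>] 0) (𝓝 r) := by
    simpa using tendsto_of_isBigO_sub_pow hl three_ne_zero (by fun_prop) hnormal
  filter_upwards [htendsto.eventually_const_lt hr] with s hs
  rw [angle_eq_arctan_norm_starProjection_div_inner hu hs]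

theorem inner_deriv_eq_zero_of_norm_eventually_eq {f : ℝ → E} {t c : ℝ}
    (hf : DifferentiableAt ℝ f t) (hnorm : ∀ᶠ u in 𝓝 t, ‖f u‖ = c) : ⟪f t, deriv f t⟫ = 0 := by
  have hsq : (‖f ·‖ ^ 2) =ᶠ[𝓝 t] fun _ ↦ c ^ 2 := hnorm.mono fun u hu ↦ by simp [hu]
  have hconst : HasDerivAt (‖f ·‖ ^ 2) 0 t := (hasDerivAt_const t (c ^ 2)).congr_of_eventuallyEq hsq
  simpa using hf.hasDerivAt.norm_sq.unique hconst

theorem inner_deriv_deriv_eq_neg_norm_sq {f : ℝ → E} {t c : ℝ} (hf : ContDiffAt ℝ 2 f t)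
    (hnorm : ∀ᶠ u in 𝓝 t, ‖f u‖ = c) : ⟪f t, deriv (deriv f) t⟫ = -‖deriv f t‖ ^ 2 := by
  have hperp : (fun u ↦ ⟪f u, deriv f u⟫) =ᶠ[𝓝 t] fun _ ↦ 0 := by
    filter_upwards [hf.eventually (by simp), hnorm.eventually_nhds] with u hu hu'
    exact inner_deriv_eq_zero_of_norm_eventually_eq (hu.differentiableAt two_ne_zero) hu'
  have hderiv := (hf.differentiableAt two_ne_zero).hasDerivAt.inner ℝ
    ((hf.derivWithin (m := 1) (by norm_num)).differentiableAt one_ne_zero).hasDerivAt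
  have hsum := hderiv.unique ((hasDerivAt_const t (0 : ℝ)).congr_of_eventuallyEq hperp)
  rw [real_inner_self_eq_norm_sq] at hsum
  linarith

theorem isBigO_mul_angle_sub_of_norm_deriv_eq_one {γ : ℝ → E} {u : E} {κ r : ℝ}
    (hγ : ContDiffAt ℝ 4 γ 0) (hunit : ∀ᶠ t in 𝓝 0, ‖deriv γ t‖ = 1) (hu : ‖u‖ = 1)
    (hperp : ⟪u, deriv γ 0⟫ = 0) (hκ : deriv (deriv γ) 0 = κ • u) (hr : 0 < r) :
    (fun s ↦ r * angle u (γ s - (γ 0 - r • u)) - (s - 1 / 6 * (κ + 1 / r) * (κ + 2 / r) * s ^ 3))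
      =O[𝓝[>] 0] fun s : ℝ ↦ s ^ 4 := by
  have htaylor : (fun s ↦ γ s - (γ 0 - r • u) - ((r + κ / 2 * s ^ 2) • u + s • deriv γ 0
      + s ^ 3 • (6⁻¹ : ℝ) • deriv (deriv (deriv γ)) 0)) =O[𝓝[>] 0] fun s : ℝ ↦ s ^ 4 := by
    have hcubic := (isBigO_sub_taylor (n := 3) (f := γ) (a := 0) (by exact_mod_cast hγ)).mono
      (nhdsWithin_le_nhds (s := Set.Ioi 0))
    simp only [sub_zero] at hcubic
    refine hcubic.congr_left fun s ↦ ?_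
    simp only [Finset.sum_range_succ, Finset.sum_range_zero, iteratedDeriv_succ, iteratedDeriv_zero,
      Nat.factorial, hκ]
    push_cast
    module
  have hthird : ⟪deriv γ 0, deriv (deriv (deriv γ)) 0⟫ = -κ ^ 2 := by
    rw [inner_deriv_deriv_eq_neg_norm_sq (hγ.derivWithin (m := 2) (by norm_num)) hunit, hκ,
      norm_smul, hu, mul_one, Real.norm_eq_abs, sq_abs]
  refine (isBigO_mul_angle_sub hu hunit.self_of_nhds hperp hr htaylor).congr_left fun s ↦ ?_
  rw [inner_smul_right, hthird]
  field_simp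
  ring

theorem stmt_3_general (γ : ℝ → E) (hγ : ContDiffAt ℝ 4 γ 0)
    (hunit : ∀ᶠ t in 𝓝 0, ‖deriv γ t‖ = 1)
    (x : E) (hx : x = γ 0) (n : E) (hn : ‖n‖ = 1) (hperp : ⟪n, deriv γ 0⟫ = 0)
    (κy : ℝ) (hκy : deriv (deriv γ) 0 = κy • n) (κ₀ : ℝ) (hκ₀ : 0 < κ₀)
    (r : ℝ) (hr : r = 1 / κ₀) (c : E) (hc : c = x + r • n) :
    ∃ C > (0 : ℝ), ∃ ε > (0 : ℝ), ∀ s ∈ Set.Ioo (0 : ℝ) ε,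
      |r * Real.arccos (⟪x - c, γ s - c⟫ / (r * ‖γ s - c‖))
          - (s - (1 / 6) * (κy - κ₀) * (κy - 2 * κ₀) * s ^ 3)| ≤ C * s ^ 4 := by
  have hr0 : 0 < r := hr ▸ one_div_pos.2 hκ₀
  have hxc : x - c = r • -n := by rw [hc]; module
  have hc' : c = γ 0 - r • -n := by rw [← hx, hc]; module
  have harccos (s : ℝ) :
      Real.arccos (⟪x - c, γ s - c⟫ / (r * ‖γ s - c‖)) = angle (-n) (γ s - c) := by
    have hnorm : ‖x - c‖ = r := by
      rw [hxc, norm_smul, norm_neg, hn, mul_one, Real.norm_of_nonneg hr0.le]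
    rw [← angle_smul_left_of_pos (-n) (γ s - c) hr0, ← hxc, angle, hnorm]
  have hangle := isBigO_mul_angle_sub_of_norm_deriv_eq_one (κ := -κy) hγ hunit
    (by rwa [norm_neg]) (by rw [inner_neg_left, hperp, neg_zero]) (by rw [hκy, neg_smul_neg]) hr0
  obtain ⟨C, hC, ε, hε, hbound⟩ := exists_forall_Ioo_abs_le_of_isBigO hangle
  refine ⟨C, hC, ε, hε, fun s hs ↦ ?_⟩
  have hs_bound := hbound s (by rwa [zero_add])
  rw [← hc', ← harccos, abs_of_nonneg (by positivity : 0 ≤ s ^ 4)] at hs_bound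
  convert hs_bound using 5
  rw [hr]
  field_simp
  ring

end InnerProduct

end

/-- Theorem 3 of the paper (with the exact third-order coefficient): for a smooth
unit-speed curve `γ` in `ℝ^D` with `γ''(0) = κ_y n` for a unit vector `n ⊥ γ'(0)`,
and a sphere of curvature `κ₀ > 0` (radius `r = 1/κ₀`, center `c = x + r n`)
through `x = γ(0)`, the spherical distance estimate equals
`s − (1/6)(κ_y − κ₀)(κ_y − 2κ₀)s³ + O(s⁴)`. -/
theorem stmt_3 {D : ℕ} (γ : ℝ → EuclideanSpace ℝ (Fin D))
    (hγ : ContDiff ℝ (⊤ : ℕ∞) γ)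
    (hunit : ∀ t : ℝ, ‖deriv γ t‖ = 1)
    (x : EuclideanSpace ℝ (Fin D)) (hx : x = γ 0)
    (n : EuclideanSpace ℝ (Fin D)) (hn : ‖n‖ = 1)
    (hperp : ⟪n, deriv γ 0⟫ = 0)
    (κy : ℝ) (hκy : deriv (deriv γ) 0 = κy • n)
    (κ₀ : ℝ) (hκ₀ : 0 < κ₀)
    (r : ℝ) (hr : r = 1 / κ₀)
    (c : EuclideanSpace ℝ (Fin D)) (hc : c = x + r • n) :
    ∃ C > (0 : ℝ), ∃ ε > (0 : ℝ), ∀ s ∈ Set.Ioo (0 : ℝ) ε,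
      |r * Real.arccos (⟪x - c, γ s - c⟫ / (r * ‖γ s - c‖))
          - (s - (1 / 6) * (κy - κ₀) * (κy - 2 * κ₀) * s ^ 3)| ≤ C * s ^ 4 :=
  stmt_3_general γ (contDiff_infty.1 hγ 4).contDiffAt (.of_forall hunit)
    x hx n hn hperp κy hκy κ₀ hκ₀ r hr c hc
end

section
/- Let γ : ℝ → ℝ^D be a smooth (C^∞) curve parametrized by arc length, i.e. ‖γ'(t)‖ = 1 for all t, and set x = γ(0). Let V ⊆ ℝ^D be a linear subspace with γ'(0) ∈ V and γ''(0) ∈ V^⊥, let n ∈ V^⊥ be a unit vector, let r > 0, and set c = x + r n. Then there exist constants C > 0 and ε > 0 such that for all s ∈ (0, ε), | r·arccos( ⟨x − c, γ(s) − c⟩ / (r ‖γ(s) − c‖) ) − s | ≤ C s³. -/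
open RealInnerProductSpace

/-!
Write `u = x - c` and split `γ s - c = b s • u + p s` with `p s ⟂ u`. For small `s` the angle
between `u` and `γ s - c` is the arctangent of `‖p s‖ / (b s * ‖u‖)`. Since `γ'(0) ⟂ u`, the
coefficient is `b s = 1 + O(s²)`. Projecting the Taylor expansion of `γ` to `uᗮ` gives
`p s = s γ'(0) + (s² / 2) q + O(s³)`, where `q` is the projection of `γ''(0)` and is still
orthogonal to the unit vector `γ'(0)`, so `‖p s‖ = |s| + O(s³)` by Pythagoras. Finally
`arctan y = y + O(y³)`, because the second derivative of `arctan` vanishes at `0`.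
-/

open Asymptotics Filter InnerProductGeometry Topology

section Taylor

variable {E : Type*} [NormedAddCommGroup E] [NormedSpace ℝ E] {f : ℝ → E} {x₀ : ℝ}

theorem sub_taylor_sum_isBigO {n : ℕ} (hf : ContDiffAt ℝ (n + 1) f x₀) :
    (fun x => f x - ∑ k ∈ Finset.range (n + 1),
      ((k.factorial : ℝ)⁻¹ * (x - x₀) ^ k) • iteratedDeriv k f x₀)
      =O[𝓝 x₀] fun x => (x - x₀) ^ (n + 1) := by
  obtain ⟨U, hU, hfU⟩ := hf.contDiffOn le_rfl (by simp)
  obtain ⟨δ, hδ, hball⟩ := Metric.mem_nhds_iff.1 hU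
  have hx₀ : x₀ ∈ Metric.ball x₀ δ := Metric.mem_ball_self hδ
  have hrem := taylor_isLittleO (n := n + 1) (convex_ball x₀ δ) hx₀
    (by exact_mod_cast hfU.mono hball)
  rw [Metric.isOpen_ball.nhdsWithin_eq hx₀] at hrem
  have hlast : (fun x => (((n + 1).factorial : ℝ)⁻¹ * (x - x₀) ^ (n + 1)) •
      iteratedDeriv (n + 1) f x₀) =O[𝓝 x₀] fun x => (x - x₀) ^ (n + 1) := by
    have hpow := (isBigO_refl (fun x : ℝ => (x - x₀) ^ (n + 1)) (𝓝 x₀)).const_mul_left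
      ((n + 1).factorial : ℝ)⁻¹
    simpa using hpow.smul
      (isBigO_const_const (iteratedDeriv (n + 1) f x₀) (one_ne_zero (α := ℝ)) _)
  refine (hrem.isBigO.add hlast).congr_left fun x => ?_
  simp only [taylor_within_apply, iteratedDerivWithin_of_isOpen Metric.isOpen_ball hx₀,
    Finset.sum_range_succ _ (n + 1)]
  abel

theorem sub_taylor_one_isBigO (hf : ContDiffAt ℝ 2 f x₀) :
    (fun x => f x - f x₀ - (x - x₀) • deriv f x₀) =O[𝓝 x₀] fun x => (x - x₀) ^ 2 := by
  simpa [Finset.sum_range_succ, sub_sub] using sub_taylor_sum_isBigO (n := 1) hf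

theorem sub_taylor_two_isBigO (hf : ContDiffAt ℝ 3 f x₀) :
    (fun x => f x - f x₀ - ((x - x₀) • deriv f x₀ + ((x - x₀) ^ 2 / 2) • deriv (deriv f) x₀))
      =O[𝓝 x₀] fun x => (x - x₀) ^ 3 := by
  simpa [Finset.sum_range_succ, sub_sub, iteratedDeriv_succ, add_assoc, div_eq_inv_mul] using
    sub_taylor_sum_isBigO (n := 2) (mod_cast hf)

theorem arctan_sub_self_isBigO : (fun y => Real.arctan y - y) =O[𝓝 0] fun y => y ^ 3 := by
  have hderiv2 : deriv (deriv Real.arctan) 0 = 0 := by simp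
  simpa [hderiv2] using sub_taylor_two_isBigO (x₀ := 0) Real.contDiff_arctan.contDiffAt

end Taylor

section RealAsymptotics

theorem mul_arctan_div_sub_self_isBigO {r : ℝ} (hr : r ≠ 0) :
    (fun y => r * Real.arctan (y / r) - y) =O[𝓝 0] fun y => y ^ 3 := by
  have hlim : Tendsto (fun y : ℝ => y / r) (𝓝 0) (𝓝 0) := by
    simpa using (continuous_id.div_const r).tendsto 0
  have hcube : (fun y : ℝ => (y / r) ^ 3) =O[𝓝 0] fun y => y ^ 3 := by
    simpa only [div_eq_inv_mul] using ((isBigO_refl _ _).const_mul_left _).pow 3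
  refine (((arctan_sub_self_isBigO.comp_tendsto hlim).trans hcube).const_mul_left r).congr_left
    fun y => ?_
  simp only [Function.comp_apply]
  field_simp

theorem div_sub_abs_isBigO {f b : ℝ → ℝ} (hf : (fun s => f s - |s|) =O[𝓝 0] fun s => s ^ 3)
    (hb : (fun s => b s - 1) =O[𝓝 0] fun s => s ^ 2) :
    (fun s => f s / b s - |s|) =O[𝓝 0] fun s => s ^ 3 := by
  have hb_lim : Tendsto b (𝓝 0) (𝓝 1) := by
    have hsq : Tendsto (fun s : ℝ => s ^ 2) (𝓝 0) (𝓝 0) := by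
      simpa using (continuous_pow 2).tendsto (0 : ℝ)
    exact tendsto_sub_nhds_zero_iff.1 (hb.trans_tendsto hsq)
  have hnum : (fun s => f s - |s| - |s| * (b s - 1)) =O[𝓝 0] fun s => s ^ 3 := by
    refine hf.sub ?_
    simpa only [pow_succ'] using ((isBigO_refl (fun s : ℝ => s) (𝓝 0)).abs_left).mul hb
  have hinv : (fun s => (b s)⁻¹) =O[𝓝 0] fun _ => (1 : ℝ) :=
    (hb_lim.inv₀ one_ne_zero).isBigO_one ℝ
  refine (hnum.mul hinv).congr' ?_ (by simp)
  filter_upwards [hb_lim.eventually_ne one_ne_zero] with s hs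
  field_simp
  ring

theorem mul_arctan_div_sub_abs_isBigO {r : ℝ} (hr : r ≠ 0) {g : ℝ → ℝ}
    (hg : (fun s => g s - |s|) =O[𝓝 0] fun s => s ^ 3) :
    (fun s => r * Real.arctan (g s / r) - |s|) =O[𝓝 0] fun s => s ^ 3 := by
  have hg_linear : g =O[𝓝 0] fun s => s := by
    have habs : (fun s : ℝ => |s|) =O[𝓝 0] fun s => s := (isBigO_refl _ _).abs_left
    have hcube : (fun s : ℝ => s ^ 3) =O[𝓝 0] fun s => s := by
      simpa using (isLittleO_pow_pow (𝕜 := ℝ) (by norm_num : 1 < 3)).isBigO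
    simpa using (hg.trans hcube).add habs
  have hg_lim : Tendsto g (𝓝 0) (𝓝 0) := hg_linear.trans_tendsto tendsto_id
  have harctan := ((mul_arctan_div_sub_self_isBigO hr).comp_tendsto hg_lim).trans
    (hg_linear.pow 3)
  simpa [Function.comp_def] using harctan.add hg

theorem exists_abs_le_of_isBigO_nhds_zero {f g : ℝ → ℝ} (h : f =O[𝓝 0] g) :
    ∃ C > 0, ∃ ε > 0, ∀ s, |s| < ε → |f s| ≤ C * |g s| := by
  obtain ⟨C, hC, hfg⟩ := h.exists_pos
  obtain ⟨ε, hε, hbound⟩ := (nhds_basis_zero_abs_lt ℝ).eventually_iff.1 hfg.bound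
  exact ⟨C, hC, ε, hε, fun s hs => hbound hs⟩

end RealAsymptotics

section InnerProductSpace

variable {E : Type*} [NormedAddCommGroup E] [InnerProductSpace ℝ E]

theorem abs_norm_add_sub_one_le {v w : E} (hv : ‖v‖ = 1) (hvw : ⟪v, w⟫ = 0) :
    |‖v + w‖ - 1| ≤ ‖w‖ ^ 2 := by
  have hpyth := norm_add_sq_eq_norm_sq_add_norm_sq_real hvw
  rw [hv] at hpyth
  have hle : 1 ≤ ‖v + w‖ := by nlinarith [norm_nonneg (v + w), mul_self_nonneg ‖w‖]
  rw [abs_of_nonneg (sub_nonneg.2 hle)]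
  nlinarith

theorem norm_sub_abs_isBigO {p : ℝ → E} {v w : E} (hv : ‖v‖ = 1) (hvw : ⟪v, w⟫ = 0)
    (hp : (fun s => p s - (s • v + (s ^ 2 / 2) • w)) =O[𝓝 0] fun s => s ^ 3) :
    (fun s => ‖p s‖ - |s|) =O[𝓝 0] fun s => s ^ 3 := by
  have hnorm : (fun s => ‖p s‖ - ‖s • v + (s ^ 2 / 2) • w‖) =O[𝓝 0] fun s => s ^ 3 :=
    (IsBigO.of_bound' (.of_forall fun _ => abs_norm_sub_norm_le _ _)).trans hp
  have hpoly : (fun s : ℝ => ‖s • v + (s ^ 2 / 2) • w‖ - |s|) =O[𝓝 0] fun s => s ^ 3 := by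
    refine .of_bound (‖w‖ ^ 2 / 4) (.of_forall fun s => ?_)
    have hfactor : s • v + (s ^ 2 / 2) • w = s • (v + (s / 2) • w) := by module
    have horth : ⟪v, (s / 2) • w⟫ = 0 := by rw [inner_smul_right, hvw, mul_zero]
    calc ‖‖s • v + (s ^ 2 / 2) • w‖ - |s|‖ = |s| * |‖v + (s / 2) • w‖ - 1| := by
          rw [hfactor, norm_smul, Real.norm_eq_abs, Real.norm_eq_abs, ← mul_sub_one, abs_mul,
            abs_abs]
      _ ≤ |s| * ‖(s / 2) • w‖ ^ 2 := by gcongr; exact abs_norm_add_sub_one_le hv horth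
      _ = ‖w‖ ^ 2 / 4 * ‖s ^ 3‖ := by
          simp only [norm_smul, norm_div, norm_pow, Real.norm_eq_abs, Nat.abs_ofNat]
          ring
  simpa using hnorm.add hpoly

open Submodule in
theorem angle_eq_arctan_norm_starProjection {u w : E} (h : 0 < ⟪u, w⟫) :
    angle u w = Real.arctan (‖(ℝ ∙ u)ᗮ.starProjection w‖ / (⟪u, w⟫ / ‖u‖ ^ 2) / ‖u‖) := by
  have hu : u ≠ 0 := by rintro rfl; simp at h
  have hb : 0 < ⟪u, w⟫ / ‖u‖ ^ 2 := by positivity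
  have hdecomp : w = (⟪u, w⟫ / ‖u‖ ^ 2) • u + (ℝ ∙ u)ᗮ.starProjection w := by
    simp [starProjection_singleton]
  have horth : ⟪(⟪u, w⟫ / ‖u‖ ^ 2) • u, (ℝ ∙ u)ᗮ.starProjection w⟫ = 0 :=
    inner_right_of_mem_orthogonal (smul_mem _ _ (mem_span_singleton_self u))
      (starProjection_apply_mem _ w)
  calc angle u w
      = angle ((⟪u, w⟫ / ‖u‖ ^ 2) • u)
          ((⟪u, w⟫ / ‖u‖ ^ 2) • u + (ℝ ∙ u)ᗮ.starProjection w) := by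
        rw [← hdecomp, angle_smul_left_of_pos _ _ hb]
    _ = _ := by
        rw [angle_add_eq_arctan_of_inner_eq_zero horth (smul_ne_zero hb.ne' hu), norm_smul,
          Real.norm_of_nonneg hb.le, div_div]

section TangentCurve

variable {γ : ℝ → E} {c : E}

theorem inner_div_norm_sq_sub_one_isBigO (hγ : ContDiffAt ℝ 2 γ 0) (hc : γ 0 ≠ c)
    (htan : ⟪γ 0 - c, deriv γ 0⟫ = 0) :
    (fun s => ⟪γ 0 - c, γ s - c⟫ / ‖γ 0 - c‖ ^ 2 - 1) =O[𝓝 0] fun s => s ^ 2 := by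
  have hu : ‖γ 0 - c‖ ^ 2 ≠ 0 := by simpa [sub_eq_zero] using hc
  have htaylor : (fun s => γ s - γ 0 - s • deriv γ 0) =O[𝓝 0] fun s => s ^ 2 := by
    simpa using sub_taylor_one_isBigO hγ
  refine ((((innerSL ℝ (γ 0 - c)).isBigO_comp _ _).trans htaylor).const_mul_left
    (‖γ 0 - c‖ ^ 2)⁻¹).congr_left fun s => ?_
  have hinner : ⟪γ 0 - c, γ s - γ 0 - s • deriv γ 0⟫ =
      ⟪γ 0 - c, γ s - c⟫ - ‖γ 0 - c‖ ^ 2 := by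
    rw [inner_sub_right, inner_smul_right, htan, mul_zero, sub_zero,
      ← sub_sub_sub_cancel_right (γ s) (γ 0) c, inner_sub_right, real_inner_self_eq_norm_sq]
  rw [innerSL_apply_apply, hinner, mul_sub, inv_mul_cancel₀ hu, inv_mul_eq_div]

open Submodule in
theorem norm_starProjection_sub_abs_isBigO (hγ : ContDiffAt ℝ 3 γ 0) (hspeed : ‖deriv γ 0‖ = 1)
    (hacc : ⟪deriv γ 0, deriv (deriv γ) 0⟫ = 0) (htan : ⟪γ 0 - c, deriv γ 0⟫ = 0) :
    (fun s => ‖(ℝ ∙ (γ 0 - c))ᗮ.starProjection (γ s - c)‖ - |s|) =O[𝓝 0] fun s => s ^ 3 := by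
  set P := (ℝ ∙ (γ 0 - c))ᗮ.starProjection with hP
  have hPu : P (γ 0 - c) = 0 := starProjection_orthogonalComplement_singleton_eq_zero _
  have hPv : P (deriv γ 0) = deriv γ 0 :=
    starProjection_eq_self_iff.2 (mem_orthogonal_singleton_iff_inner_right.2 htan)
  have hacc_proj : ⟪deriv γ 0, P (deriv (deriv γ) 0)⟫ = 0 := by
    rw [← inner_starProjection_left_eq_right, ← hP, hPv, hacc]
  have htaylor : (fun s => γ s - γ 0 - (s • deriv γ 0 + (s ^ 2 / 2) • deriv (deriv γ) 0))
      =O[𝓝 0] fun s => s ^ 3 := by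
    simpa using sub_taylor_two_isBigO hγ
  refine norm_sub_abs_isBigO hspeed hacc_proj
    (((P.isBigO_comp _ _).trans htaylor).congr_left fun s => ?_)
  rw [← sub_sub_sub_cancel_right (γ s) (γ 0) c]
  simp only [map_sub P (_ - _), hPu, sub_zero, map_add, map_smul, hPv]

theorem norm_mul_angle_sub_abs_isBigO (hγ : ContDiffAt ℝ 3 γ 0) (hspeed : ‖deriv γ 0‖ = 1)
    (hacc : ⟪deriv γ 0, deriv (deriv γ) 0⟫ = 0) (hc : γ 0 ≠ c)
    (htan : ⟪γ 0 - c, deriv γ 0⟫ = 0) :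
    (fun s => ‖γ 0 - c‖ * angle (γ 0 - c) (γ s - c) - |s|) =O[𝓝 0] fun s => s ^ 3 := by
  have hu : ‖γ 0 - c‖ ≠ 0 := norm_ne_zero_iff.2 (sub_ne_zero.2 hc)
  have hradial := inner_div_norm_sq_sub_one_isBigO (hγ.of_le (by norm_num)) hc htan
  have hinner_lim : Tendsto (fun s => ⟪γ 0 - c, γ s - c⟫) (𝓝 0) (𝓝 (‖γ 0 - c‖ ^ 2)) := by
    rw [← real_inner_self_eq_norm_sq]
    exact tendsto_const_nhds.inner (hγ.continuousAt.sub_const c)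
  have hproj := norm_starProjection_sub_abs_isBigO hγ hspeed hacc htan
  refine (mul_arctan_div_sub_abs_isBigO hu
    (div_sub_abs_isBigO hproj hradial)).congr' ?_ .rfl
  filter_upwards [hinner_lim.eventually_const_lt (by positivity)] with s hs
  rw [angle_eq_arctan_norm_starProjection hs]

theorem stmt_6_general (hγ : ContDiffAt ℝ 3 γ 0) (hspeed : ‖deriv γ 0‖ = 1)
    (hacc : ⟪deriv γ 0, deriv (deriv γ) 0⟫ = 0) (htan : ⟪γ 0 - c, deriv γ 0⟫ = 0) {r : ℝ}
    (hr : 0 < r) (hrc : ‖γ 0 - c‖ = r) :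
    ∃ C > (0 : ℝ), ∃ ε > (0 : ℝ), ∀ s : ℝ, |s| < ε →
      |(r * Real.arccos (⟪γ 0 - c, γ s - c⟫ / (r * ‖γ s - c‖)) - |s|)| ≤ C * |s| ^ 3 := by
  have hc : γ 0 ≠ c := by simpa [← hrc, sub_eq_zero] using hr
  simpa only [angle, hrc, abs_pow] using
    exists_abs_le_of_isBigO_nhds_zero (norm_mul_angle_sub_abs_isBigO hγ hspeed hacc hc htan)

end TangentCurve

end InnerProductSpace

/-- Theorem 4 of the paper: for a smooth unit-speed curve `γ` through `x = γ(0)`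
with `γ'(0)` in a subspace `V` (the tangent space) and `γ''(0)` in `Vᗮ` (the normal
space), and a sphere of radius `r` centered at `c = x + r n` with `n ∈ Vᗮ` a unit
vector, the spherical distance estimate has third-order error. -/
theorem stmt_6 {D : ℕ} (γ : ℝ → EuclideanSpace ℝ (Fin D))
    (hγ : ContDiff ℝ (⊤ : ℕ∞) γ)
    (hunit : ∀ t : ℝ, ‖deriv γ t‖ = 1)
    (x : EuclideanSpace ℝ (Fin D)) (hx : x = γ 0)
    (V : Submodule ℝ (EuclideanSpace ℝ (Fin D)))
    (htan : deriv γ 0 ∈ V) (hnor : deriv (deriv γ) 0 ∈ Vᗮ)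
    (n : EuclideanSpace ℝ (Fin D)) (hnV : n ∈ Vᗮ) (hn : ‖n‖ = 1)
    (r : ℝ) (hr : 0 < r)
    (c : EuclideanSpace ℝ (Fin D)) (hc : c = x + r • n) :
    ∃ C > (0 : ℝ), ∃ ε > (0 : ℝ), ∀ s ∈ Set.Ioo (0 : ℝ) ε,
      |r * Real.arccos (⟪x - c, γ s - c⟫ / (r * ‖γ s - c‖)) - s| ≤ C * s ^ 3 := by
  subst hx
  have hradius : γ 0 - c = -(r • n) := by simp [hc]
  obtain ⟨C, hC, ε, hε, hbound⟩ := stmt_6_general (contDiff_infty.1 hγ 3).contDiffAt (hunit 0)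
    (V.inner_right_of_mem_orthogonal htan hnor) (c := c)
    (by simp [hradius, inner_smul_left, V.inner_left_of_mem_orthogonal htan hnV]) hr
    (by simp [hradius, norm_smul, hn, abs_of_pos hr])
  refine ⟨C, hC, ε, hε, fun s hs => ?_⟩
  simpa only [abs_of_pos hs.1] using hbound s (by simpa only [abs_of_pos hs.1] using hs.2)
end
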